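/- The set $\{1, \theta, \theta^2, \theta^3, \theta^4, \frac{\theta^5}{5}, \frac{\theta^6}{5}, \frac{\theta^7}{5}, \frac{\theta^8}{5}, \frac{\theta^9}{5}\}$ is an integral basis of $K = \mathbb{Q}(\theta)$, where $\theta$ is a root of $x^{10} - 150$. -/

import Mathlib

open Polynomial

/-!
Let `R` be integrally closed and `θ ^ n = a` with `a ∈ R` radical, and let `z` be integral with
`θ * z ∈ R[θ]`, say `θ * z = r + θ * y`. Then `r ^ n = a * (z - y) ^ n`, so `a ∣ r ^ n`, hence
`a ∣ r` and `z ∈ R[θ]`: powers of `θ` can be cancelled. For any `a`, the trace form gives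
`n * θ ^ (n - 1) * z ∈ R[θ]` for every integral `z`, so if `n` divides a power of `a`, then
`θ ^ m * z ∈ R[θ]` for some `m`.

Over `ℤ`, both facts together show that `ℤ[√6]` is integrally closed. For `θ ^ 10 = 150` only the
second one is available over `ℤ`, as `150 = 5 ^ 2 * 6` is not squarefree. But `θ ^ 5 = 5 * √6` is
radical in `ℤ[√6]`, so the power of `θ` can be cancelled over `ℤ[√6]`. Hence the integral closure
is `ℤ[√6][θ]`, spanned over `ℤ` by the `θ ^ i` and `√6 * θ ^ i = θ ^ (5 + i) / 5` with `i < 5`.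
-/

theorem isRadical_mul_of_isCoprime {R : Type*} [CommRing R] {a b : R} (ha : IsRadical a)
    (hb : IsRadical b) (hab : IsCoprime a b) : IsRadical (a * b) := fun n x h ↦
  hab.mul_dvd (ha n x (dvd_of_mul_right_dvd h)) (hb n x (dvd_of_mul_left_dvd h))

theorem not_isSquare_of_squarefree_of_prime_dvd {R : Type*} [CommRing R] {p d : R}
    (hp : Prime p) (hpd : p ∣ d) (hd : Squarefree d) : ¬ IsSquare d := by
  rintro ⟨r, rfl⟩
  exact hp.not_isUnit (isUnit_of_dvd_unit (hp.dvd_of_dvd_pow (sq r ▸ hpd)) (hd r dvd_rfl))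

theorem irreducible_X_pow_sub_C_of_prime {R : Type*} (K : Type*) [CommRing R] [IsDomain R]
    [IsIntegrallyClosed R] [Field K] [Algebra R K] [IsFractionRing R K] {p a : R} {n : ℕ}
    (hp : Prime p) (hpa : p ∣ a) (hpa₂ : ¬ p ^ 2 ∣ a) (hn : n ≠ 0) :
    Irreducible (X ^ n - C (algebraMap R K a)) := by
  have hmonic : (X ^ n - C a).Monic := monic_X_pow_sub_C a hn
  have hprime : (Ideal.span {p}).IsPrime := (Ideal.span_singleton_prime hp.ne_zero).mpr hp
  have hmap : (X ^ n - C a).map (algebraMap R K) = X ^ n - C (algebraMap R K a) := by simp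
  rw [← hmap, ← hmonic.irreducible_iff_irreducible_map_fraction_map]
  refine IsEisensteinAt.irreducible (𝓟 := Ideal.span {p})
    (hmonic.isEisensteinAt_of_mem_of_notMem hprime.ne_top (fun {i} hi ↦ ?_) ?_) hprime
    hmonic.isPrimitive (by rw [natDegree_X_pow_sub_C]; exact Nat.pos_of_ne_zero hn)
  · rw [natDegree_X_pow_sub_C] at hi
    rw [coeff_sub, coeff_X_pow, if_neg hi.ne, zero_sub, neg_mem_iff, coeff_C]
    split_ifs
    · exact Ideal.mem_span_singleton.mpr hpa
    · exact zero_mem _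
  · rw [coeff_sub, coeff_X_pow, if_neg hn.symm, coeff_C_zero, zero_sub, neg_mem_iff,
      Ideal.span_singleton_pow, Ideal.mem_span_singleton]
    exact hpa₂

theorem irreducible_X_pow_sub_C_sq_mul {b d : ℤ} (hbd : Squarefree (b * d)) (h2 : 2 ∣ d) {n : ℕ}
    (hn : n ≠ 0) : Irreducible (X ^ n - C (algebraMap ℤ ℚ (b ^ 2 * d))) := by
  refine irreducible_X_pow_sub_C_of_prime ℚ Int.prime_two (h2.mul_left _) (fun h ↦ ?_) hn
  obtain ⟨hcop, -, hd⟩ := squarefree_mul_iff.mp hbd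
  rw [isRelPrime_iff_isCoprime] at hcop
  have h4 : 2 ^ 2 ∣ d := (hcop.of_isCoprime_of_dvd_right h2).symm.pow.dvd_of_dvd_mul_left h
  exact Int.prime_two.not_isUnit (hd 2 (sq (2 : ℤ) ▸ h4))

theorem minpoly_eq_X_pow_sub_C {R K L : Type*} [CommRing R] [Field K] [Field L] [Algebra R K]
    [Algebra R L] [Algebra K L] [IsScalarTower R K L] {a : R} {θ : L} {n : ℕ}
    (hθ : θ ^ n = algebraMap R L a) (hirr : Irreducible (X ^ n - C (algebraMap R K a))) :
    minpoly K θ = X ^ n - C (algebraMap R K a) := by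
  have hn : n ≠ 0 := ne_zero_of_irreducible_X_pow_sub_C hirr
  refine (minpoly.eq_of_irreducible_of_monic hirr ?_ (monic_X_pow_sub_C _ hn)).symm
  simp [hθ, ← IsScalarTower.algebraMap_apply]

section PureExtension

variable {R L : Type*} [CommRing R] [IsIntegrallyClosed R] [Field L] [Algebra R L]

theorem dvd_of_algebraMap_eq_mul_of_isIntegral [FaithfulSMul R L] {r s : R} {u : L}
    (hu : IsIntegral R u) (h : algebraMap R L r = algebraMap R L s * u) : s ∣ r := by
  have : IsDomain R := (FaithfulSMul.algebraMap_injective R L).isDomain _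
  obtain rfl | hs := eq_or_ne s 0
  · rw [map_zero, zero_mul, FaithfulSMul.algebraMap_eq_zero_iff] at h
    rw [h]
  let ι : FractionRing R →ₐ[R] L :=
    IsFractionRing.liftAlgHom (g := Algebra.ofId R L) (FaithfulSMul.algebraMap_injective R L)
  have hs' : algebraMap R L s ≠ 0 := (FaithfulSMul.algebraMap_eq_zero_iff R L).not.mpr hs
  have hu' : ι (algebraMap R _ r / algebraMap R _ s) = u := by
    rw [map_div₀, ι.commutes, ι.commutes, h, mul_div_cancel_left₀ _ hs']
  rw [← hu', isIntegral_algHom_iff ι ι.toRingHom.injective] at hu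
  obtain ⟨q, hq⟩ := IsIntegrallyClosed.isIntegral_iff.mp hu
  refine ⟨q, FaithfulSMul.algebraMap_injective R L ?_⟩
  rw [map_mul, ← ι.commutes q, hq, hu', h]

theorem exists_eq_algebraMap_add_mul_of_mem_adjoin_singleton {R A : Type*} [CommRing R]
    [CommRing A] [Algebra R A] {x y : A} (hy : y ∈ Algebra.adjoin R {x}) :
    ∃ r : R, ∃ z ∈ Algebra.adjoin R {x}, y = algebraMap R A r + x * z := by
  rw [Algebra.adjoin_singleton_eq_range_aeval] at hy
  obtain ⟨p, rfl⟩ := hy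
  refine ⟨p.coeff 0, aeval x p.divX, aeval_mem_adjoin_singleton R x, ?_⟩
  have hp : aeval x (X * p.divX + C (p.coeff 0)) = aeval x p := by rw [X_mul_divX_add]
  rw [map_add, map_mul, aeval_X, aeval_C, add_comm] at hp
  exact hp.symm

theorem mem_adjoin_of_mul_mem_adjoin [FaithfulSMul R L] {a : R} (ha : IsRadical a) {θ : L}
    (hθ₀ : θ ≠ 0) {n : ℕ} (hθ : θ ^ n = algebraMap R L a) (hn : n ≠ 0) {z : L}
    (hz : IsIntegral R z) (h : θ * z ∈ Algebra.adjoin R {θ}) : z ∈ Algebra.adjoin R {θ} := by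
  obtain ⟨r, y, hy, hzy⟩ := exists_eq_algebraMap_add_mul_of_mem_adjoin_singleton h
  have hθi : IsIntegral R θ := .of_pow (Nat.pos_of_ne_zero hn) (hθ ▸ isIntegral_algebraMap)
  have hr : algebraMap R L r = θ * (z - y) := by rw [mul_sub, hzy, add_sub_cancel_right]
  have hyi : IsIntegral R y := IsIntegral.of_mem_of_fg _ hθi.fg_adjoin_singleton _ hy
  have hrn : algebraMap R L (r ^ n) = algebraMap R L a * (z - y) ^ n := by
    rw [map_pow, hr, mul_pow, hθ]
  obtain ⟨s, rfl⟩ := ha n r (dvd_of_algebraMap_eq_mul_of_isIntegral ((hz.sub hyi).pow n) hrn)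
  have hzs : z = y + θ ^ (n - 1) * algebraMap R L s := by
    rw [← sub_eq_iff_eq_add', ← mul_right_inj' hθ₀, ← hr, map_mul, ← hθ, ← mul_assoc,
      mul_pow_sub_one hn]
  rw [hzs]
  exact add_mem hy (mul_mem (pow_mem (Algebra.self_mem_adjoin_singleton R θ) _)
    (Subalgebra.algebraMap_mem _ s))

theorem mem_adjoin_of_pow_mul_mem_adjoin [FaithfulSMul R L] {a : R} (ha : IsRadical a) {θ : L}
    (hθ₀ : θ ≠ 0) {n : ℕ} (hθ : θ ^ n = algebraMap R L a) (hn : n ≠ 0) {z : L}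
    (hz : IsIntegral R z) (m : ℕ) (h : θ ^ m * z ∈ Algebra.adjoin R {θ}) :
    z ∈ Algebra.adjoin R {θ} := by
  have hθi : IsIntegral R θ := .of_pow (Nat.pos_of_ne_zero hn) (hθ ▸ isIntegral_algebraMap)
  induction m with
  | zero => simpa using h
  | succ m ih =>
    rw [pow_succ', mul_assoc] at h
    exact ih (mem_adjoin_of_mul_mem_adjoin ha hθ₀ hθ hn ((hθi.pow m).mul hz) h)

variable (K : Type*) [Field K] [Algebra R K] [IsFractionRing R K] [Algebra K L]
  [IsScalarTower R K L]

theorem aeval_derivative_minpoly_mul_mem_adjoin [FiniteDimensional K L]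
    [Algebra.IsSeparable K L] {x z : L} (hx : IsIntegral R x) (hgen : Algebra.adjoin K {x} = ⊤)
    (hz : IsIntegral R z) :
    aeval x (derivative (minpoly K x)) * z ∈ Algebra.adjoin R {x} := by
  have : IsDomain R := (IsFractionRing.injective R K).isDomain _
  have hz_dual : z ∈ (Algebra.traceForm K L).dualSubmodule
      (Subalgebra.toSubmodule (Algebra.adjoin R {x})) := fun y hy ↦ by
    have hy : IsIntegral R y := IsIntegral.of_mem_of_fg _ hx.fg_adjoin_singleton _ hy
    obtain ⟨t, ht⟩ := IsIntegrallyClosed.isIntegral_iff.mp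
      (Algebra.isIntegral_trace (L := K) (hz.mul hy))
    exact Submodule.mem_one.mpr ⟨t, ht⟩
  rw [traceForm_dualSubmodule_adjoin R K hgen hx] at hz_dual
  obtain ⟨y, hy, rfl⟩ := hz_dual
  have hne : aeval x (derivative (minpoly K x)) ≠ 0 :=
    (Algebra.IsSeparable.isSeparable K x).aeval_derivative_ne_zero (minpoly.aeval K x)
  simpa [hne] using hy

theorem exists_pow_mul_mem_adjoin [CharZero K] {a : R} {θ : L} {n k : ℕ}
    (hθ : θ ^ n = algebraMap R L a) (hirr : Irreducible (X ^ n - C (algebraMap R K a)))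
    (hgen : Algebra.adjoin K {θ} = ⊤) (hk : (n : R) ∣ a ^ k) {z : L} (hz : IsIntegral R z) :
    ∃ m, θ ^ m * z ∈ Algebra.adjoin R {θ} := by
  have hn : n ≠ 0 := ne_zero_of_irreducible_X_pow_sub_C hirr
  have hθi : IsIntegral R θ := .of_pow (Nat.pos_of_ne_zero hn) (hθ ▸ isIntegral_algebraMap)
  have : FiniteDimensional K L := (PowerBasis.ofAdjoinEqTop hθi.tower_top hgen).finite
  obtain ⟨c, hc⟩ := hk
  have h := aeval_derivative_minpoly_mul_mem_adjoin K hθi hgen hz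
  refine ⟨n * k + (n - 1), ?_⟩
  convert Subalgebra.smul_mem _ h c using 1
  rw [minpoly_eq_X_pow_sub_C hθ hirr]
  have hnc : algebraMap R L a ^ k = n * algebraMap R L c := by
    rw [← map_pow, hc, map_mul, map_natCast]
  simp only [pow_add, pow_mul, hθ, hnc, derivative_sub, derivative_X_pow, derivative_C, sub_zero,
    map_mul, map_pow, map_natCast, aeval_X, Algebra.smul_def]
  ring

theorem integralClosure_eq_adjoin_of_pow_eq [CharZero K] {a : R} (ha : IsRadical a) {θ : L}
    {n k : ℕ} (hθ : θ ^ n = algebraMap R L a)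
    (hirr : Irreducible (X ^ n - C (algebraMap R K a)))
    (hgen : Algebra.adjoin K {θ} = ⊤) (ha₀ : a ≠ 0) (hk : (n : R) ∣ a ^ k) :
    integralClosure R L = Algebra.adjoin R {θ} := by
  have : IsDomain R := (IsFractionRing.injective R K).isDomain _
  have : FaithfulSMul R L := .trans R K L
  have hn : n ≠ 0 := ne_zero_of_irreducible_X_pow_sub_C hirr
  have hθ₀ : θ ≠ 0 := by
    rintro rfl
    rw [zero_pow hn, eq_comm, FaithfulSMul.algebraMap_eq_zero_iff] at hθ
    exact ha₀ hθ
  have hθi : IsIntegral R θ := .of_pow (Nat.pos_of_ne_zero hn) (hθ ▸ isIntegral_algebraMap)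
  refine le_antisymm (fun z hz ↦ ?_) (Algebra.adjoin_le (Set.singleton_subset_iff.mpr hθi))
  obtain ⟨m, hm⟩ := exists_pow_mul_mem_adjoin K hθ hirr hgen hk hz
  exact mem_adjoin_of_pow_mul_mem_adjoin ha hθ₀ hθ hn hz m hm

end PureExtension

section Zsqrtd

variable {d : ℤ}

theorem sqrtd_dvd_intCast_iff {m : ℤ} : (Zsqrtd.sqrtd : ℤ√d) ∣ m ↔ d ∣ m := by
  constructor
  · rintro ⟨z, hz⟩
    exact ⟨z.im, by simpa using congrArg Zsqrtd.re hz⟩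
  · exact fun h ↦ (Dvd.intro _ Zsqrtd.dmuld).trans (Int.cast_dvd_cast _ _ h)

theorem sqrtd_dvd_sub_re (z : ℤ√d) : Zsqrtd.sqrtd ∣ z - (z.re : ℤ√d) :=
  ⟨z.im, by ext <;> simp⟩

theorem isRadical_sqrtd (hd : Squarefree d) : IsRadical (Zsqrtd.sqrtd : ℤ√d) := fun n z h ↦ by
  have hpow : (Zsqrtd.sqrtd : ℤ√d) ∣ z ^ n - (z.re : ℤ√d) ^ n :=
    (sqrtd_dvd_sub_re z).trans (sub_dvd_pow_sub_pow _ _ n)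
  have hre : (Zsqrtd.sqrtd : ℤ√d) ∣ (z.re ^ n : ℤ) := by
    rw [Int.cast_pow]
    exact (dvd_iff_dvd_of_dvd_sub hpow).mp h
  have hd_re : d ∣ z.re := hd.isRadical n z.re (sqrtd_dvd_intCast_iff.mp hre)
  exact (dvd_iff_dvd_of_dvd_sub (sqrtd_dvd_sub_re z)).mpr (sqrtd_dvd_intCast_iff.mpr hd_re)

theorem isRadical_intCast_zsqrtd {b : ℤ} (hb : Squarefree b) (hbd : IsCoprime b (2 * d)) :
    IsRadical (b : ℤ√d) := fun n z h ↦ by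
  let I : Ideal (ℤ√d) := (Ideal.span {(b : ℤ√d)}).radical
  have hI : ∀ m : ℤ, (m : ℤ√d) ∈ I → b ∣ m := fun m ⟨k, hk⟩ ↦ by
    rw [Ideal.mem_span_singleton, ← Int.cast_pow, Zsqrtd.intCast_dvd_intCast] at hk
    exact hb.isRadical k m hk
  have hz : z ∈ I := ⟨n, Ideal.mem_span_singleton.mpr h⟩
  have hz' : star z ∈ I := ⟨n, Ideal.mem_span_singleton.mpr <| by
    simpa [starRingEnd_apply] using map_dvd (starRingEnd (ℤ√d)) h⟩
  have hre : b ∣ 2 * z.re := hI _ <| by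
    convert add_mem hz hz' using 1
    ext <;> simp [two_mul]
  have him : b ∣ 2 * d * z.im := hI _ <| by
    convert I.mul_mem_left Zsqrtd.sqrtd (sub_mem hz hz') using 1
    ext <;> simp [← two_mul, mul_assoc, mul_left_comm]
  exact (Zsqrtd.intCast_dvd _ _).mpr
    ⟨hbd.of_mul_right_left.dvd_of_dvd_mul_left hre, hbd.dvd_of_dvd_mul_left him⟩

theorem isRadical_intCast_mul_sqrtd {b : ℤ} (hbd : Squarefree (b * d)) (h2 : 2 ∣ d) :
    IsRadical ((b : ℤ√d) * Zsqrtd.sqrtd) := by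
  obtain ⟨hcop, hb, hd⟩ := squarefree_mul_iff.mp hbd
  rw [isRelPrime_iff_isCoprime] at hcop
  have hb2d : IsCoprime b (2 * d) := (hcop.of_isCoprime_of_dvd_right h2).mul_right hcop
  have hb_sqrtd : IsCoprime (b : ℤ√d) Zsqrtd.sqrtd :=
    (hcop.map (Int.castRingHom (ℤ√d))).of_isCoprime_of_dvd_right
      (sqrtd_dvd_intCast_iff.mpr dvd_rfl)
  exact isRadical_mul_of_isCoprime (isRadical_intCast_zsqrtd hb hb2d) (isRadical_sqrtd hd) hb_sqrtd

theorem isIntegral_zsqrtd (z : ℤ√d) : IsIntegral ℤ z := by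
  have hw : IsIntegral ℤ (Zsqrtd.sqrtd : ℤ√d) := .of_pow two_pos <| by
    rw [sq, Zsqrtd.dmuld]; exact isIntegral_algebraMap (x := d)
  obtain ⟨x, y⟩ := z
  rw [Zsqrtd.decompose]
  exact (isIntegral_algebraMap (x := x)).add (hw.mul (isIntegral_algebraMap (x := y)))

theorem faithfulSMul_zsqrtd (hd : ¬ IsSquare d) (A : Type*) [CommRing A] [CharZero A]
    [Algebra (ℤ√d) A] :
    FaithfulSMul (ℤ√d) A := by
  rw [faithfulSMul_iff_algebraMap_injective, ← Zsqrtd.lift.apply_symm_apply (algebraMap (ℤ√d) A)]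
  exact Zsqrtd.lift_injective _ fun n hn ↦ hd ⟨n, hn⟩

theorem exists_algebra_zsqrtd {A : Type*} [CommRing A] {w : A} (hw : w ^ 2 = d) :
    ∃ _ : Algebra (ℤ√d) A, algebraMap (ℤ√d) A .sqrtd = w :=
  ⟨(Zsqrtd.lift ⟨w, by rw [← sq, hw]⟩).toAlgebra, (Zsqrtd.lift_apply_apply _ _).trans (by simp)⟩

theorem algebraMap_zsqrtd_apply {A : Type*} [CommRing A] [Algebra (ℤ√d) A] (z : ℤ√d) :
    algebraMap (ℤ√d) A z = z.re + z.im * algebraMap (ℤ√d) A .sqrtd := by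
  obtain ⟨x, y⟩ := z
  simp [Zsqrtd.decompose, mul_comm]

theorem adjoin_sqrtd_le_range (A : Type*) [CommRing A] [Algebra (ℤ√d) A] :
    Algebra.adjoin ℤ {algebraMap (ℤ√d) A .sqrtd} ≤ (algebraMap (ℤ√d) A).toIntAlgHom.range :=
  Algebra.adjoin_le <| Set.singleton_subset_iff.mpr ⟨.sqrtd, rfl⟩

theorem isIntegrallyClosed_zsqrtd (hd : Squarefree d) (h2 : 2 ∣ d) :
    IsIntegrallyClosed (ℤ√d) := by
  have hirr : Irreducible (X ^ 2 - C (algebraMap ℤ ℚ d)) := by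
    simpa using irreducible_X_pow_sub_C_sq_mul (b := 1) ((one_mul d).symm ▸ hd) h2 two_ne_zero
  have : Fact (Irreducible (X ^ 2 - C (algebraMap ℤ ℚ d))) := ⟨hirr⟩
  let L := AdjoinRoot (X ^ 2 - C (algebraMap ℤ ℚ d))
  let w : L := AdjoinRoot.root _
  have hw : w ^ 2 = d := by
    have h := AdjoinRoot.eval₂_root (X ^ 2 - C (algebraMap ℤ ℚ d))
    rw [eval₂_sub, eval₂_X_pow, eval₂_C, sub_eq_zero] at h
    exact h.trans (by simp)
  obtain ⟨_, hsqrtd⟩ := exists_algebra_zsqrtd hw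
  have : CharZero L := algebraRat.charZero L
  have := faithfulSMul_zsqrtd (not_isSquare_of_squarefree_of_prime_dvd Int.prime_two h2 hd) L
  have : Algebra.IsIntegral ℤ (ℤ√d) := ⟨isIntegral_zsqrtd⟩
  have hcl : integralClosure ℤ L = Algebra.adjoin ℤ {w} :=
    integralClosure_eq_adjoin_of_pow_eq ℚ (k := 1) hd.isRadical hw hirr
      AdjoinRoot.adjoinRoot_eq_top hd.ne_zero (by simpa using h2)
  have : IsIntegrallyClosedIn (ℤ√d) L :=
    isIntegrallyClosedIn_iff.mpr ⟨FaithfulSMul.algebraMap_injective _ _, fun {x} hx ↦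
      adjoin_sqrtd_le_range L (hsqrtd ▸ hcl ▸ isIntegral_trans x hx)⟩
  exact .of_isIntegrallyClosedIn (ℤ√d) L

end Zsqrtd

section ScaledPowers

variable {K : Type*} [Field K]

/-- The family `1, θ, …, θ ^ (n - 1), θ ^ n / b, …` of the first `m` powers of `θ`, with `θ ^ i`
divided by `b ^ ⌊i / n⌋` (the exponent is a quotient of natural numbers). These are the products
`θ ^ j * (θ ^ n / b) ^ l` with `j < n`, the candidates for an integral basis. -/
def scaledPowers (θ b : K) (n m : ℕ) (i : Fin m) : K := θ ^ (i : ℕ) / b ^ ((i : ℕ) / n)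

theorem linearIndependent_scaledPowers {F : Type*} [Field F] [Algebra F K] {θ : K} {b : F}
    (hb : b ≠ 0) (n : ℕ) :
    LinearIndependent F (scaledPowers θ (algebraMap F K b) n (minpoly F θ).natDegree) := by
  have h := (linearIndependent_pow (K := F) θ).units_smul
    fun i ↦ (Units.mk0 b hb)⁻¹ ^ ((i : ℕ) / n)
  convert h using 1
  ext i
  simp [scaledPowers, Units.smul_def, Algebra.smul_def, div_eq_inv_mul]

theorem isIntegral_scaledPowers {R : Type*} [CommRing R] [Algebra R K] {θ b : K} {n : ℕ}
    (hθ : IsIntegral R θ) (hw : IsIntegral R (θ ^ n / b)) (m : ℕ) (i : Fin m) :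
    IsIntegral R (scaledPowers θ b n m i) := by
  have : scaledPowers θ b n m i = θ ^ (i % n : ℕ) * (θ ^ n / b) ^ (i / n : ℕ) := by
    rw [scaledPowers, div_pow, ← mul_div_assoc, ← pow_mul, ← pow_add, Nat.mod_add_div]
  rw [this]
  exact (hθ.pow _).mul (hw.pow _)

theorem mem_span_scaledPowers_of_mem_adjoin_zsqrtd {d b : ℤ} [Algebra (ℤ√d) K] {θ : K}
    {n : ℕ} (hn : n ≠ 0) (hb : (b : K) ≠ 0) (hθ : θ ^ n = b * algebraMap (ℤ√d) K .sqrtd) {z : K}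
    (hz : z ∈ Algebra.adjoin (ℤ√d) {θ}) :
    z ∈ Submodule.span ℤ (Set.range (scaledPowers θ (b : K) n (2 * n))) := by
  have hroot : aeval θ (X ^ n - C ((b : ℤ√d) * Zsqrtd.sqrtd)) = 0 := by simp [hθ]
  classical
  rw [← Subalgebra.mem_toSubmodule, ← Submodule.span_range_natDegree_eq_adjoin
    (monic_X_pow_sub_C _ hn) hroot, natDegree_X_pow_sub_C,
    Finset.coe_image, Submodule.mem_span_image_finset_iff_exists_fun'] at hz
  obtain ⟨c, rfl⟩ := hz
  refine sum_mem fun i hi ↦ ?_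
  have hi : i < n := Finset.mem_range.mp hi
  have hc : c i • θ ^ i = (c i).re • scaledPowers θ (b : K) n (2 * n) ⟨i, by lia⟩ +
      (c i).im • scaledPowers θ (b : K) n (2 * n) ⟨n + i, by lia⟩ := by
    rw [scaledPowers, scaledPowers, Nat.div_eq_of_lt hi, Nat.add_div_left _ (by lia),
      Nat.div_eq_of_lt hi, pow_add, hθ, Algebra.smul_def, algebraMap_zsqrtd_apply]
    simp only [pow_zero, div_one, zsmul_eq_mul]
    field_simp
    ring
  rw [hc]
  exact add_mem (Submodule.smul_mem _ _ (Submodule.subset_span ⟨_, rfl⟩))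
    (Submodule.smul_mem _ _ (Submodule.subset_span ⟨_, rfl⟩))

end ScaledPowers

theorem mem_adjoin_zsqrtd_of_isIntegral {K : Type*} [Field K] [Algebra ℚ K] {b d : ℤ}
    [Algebra (ℤ√d) K] {θ : K} {n k : ℕ} (hθ : θ ^ n = b * algebraMap (ℤ√d) K .sqrtd)
    (hgen : Algebra.adjoin ℚ {θ} = ⊤) (hbd : Squarefree (b * d)) (h2 : 2 ∣ d)
    (hn : (n : ℤ) ∣ (b * d) ^ k) {z : K} (hz : IsIntegral ℤ z) :
    z ∈ Algebra.adjoin (ℤ√d) {θ} := by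
  have hn₀ : n ≠ 0 := by
    rintro rfl
    exact pow_ne_zero k hbd.ne_zero (by simpa using hn)
  have hd : Squarefree d := hbd.of_mul_right
  have : CharZero K := algebraRat.charZero K
  have := faithfulSMul_zsqrtd (not_isSquare_of_squarefree_of_prime_dvd Int.prime_two h2 hd) K
  have := isIntegrallyClosed_zsqrtd hd h2
  have hθ' : θ ^ (2 * n) = algebraMap ℤ K (b ^ 2 * d) := by
    rw [mul_comm, pow_mul, hθ, mul_pow, ← map_pow, sq Zsqrtd.sqrtd, Zsqrtd.dmuld]
    simp
  have hn' : ((2 * n : ℕ) : ℤ) ∣ (b ^ 2 * d) ^ (k + 1) := by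
    rw [Nat.cast_mul, mul_comm, pow_succ]
    exact mul_dvd_mul (hn.trans (pow_dvd_pow_of_dvd ⟨b, by ring⟩ k)) (h2.mul_left _)
  have hθ₀ : θ ≠ 0 := by
    rintro rfl
    rw [zero_pow (by lia), eq_comm, FaithfulSMul.algebraMap_eq_zero_iff] at hθ'
    exact mul_ne_zero (pow_ne_zero 2 hbd.of_mul_left.ne_zero) hd.ne_zero hθ'
  obtain ⟨m, hm⟩ := exists_pow_mul_mem_adjoin ℚ hθ'
    (irreducible_X_pow_sub_C_sq_mul hbd h2 (by lia)) hgen hn' hz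
  have hle : Algebra.adjoin ℤ {θ} ≤ (Algebra.adjoin (ℤ√d) {θ}).restrictScalars ℤ :=
    Algebra.adjoin_le Algebra.subset_adjoin
  exact mem_adjoin_of_pow_mul_mem_adjoin (isRadical_intCast_mul_sqrtd hbd h2) hθ₀
    (by simpa using hθ) hn₀ hz.tower_top m (hle hm)

theorem integral_basis_pure_tenth_general {K : Type*} [Field K] [Algebra ℚ K] {θ : K}
    {b d : ℤ} {n k : ℕ} (hθ : θ ^ (2 * n) = b ^ 2 * d) (hgen : Algebra.adjoin ℚ {θ} = ⊤)
    (hbd : Squarefree (b * d)) (h2 : 2 ∣ d) (hn : (n : ℤ) ∣ (b * d) ^ k) :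
    LinearIndependent ℤ (scaledPowers θ (b : K) n (2 * n)) ∧
      Submodule.span ℤ (Set.range (scaledPowers θ (b : K) n (2 * n))) =
        Subalgebra.toSubmodule (integralClosure ℤ K) := by
  have hn₀ : n ≠ 0 := by
    rintro rfl
    exact pow_ne_zero k hbd.ne_zero (by simpa using hn)
  have : CharZero K := algebraRat.charZero K
  have hb : b ≠ 0 := hbd.of_mul_left.ne_zero
  have hbK : (b : K) ≠ 0 := Int.cast_ne_zero.mpr hb
  have hθ' : θ ^ (2 * n) = algebraMap ℤ K (b ^ 2 * d) := by simpa using hθ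
  have hdeg : (minpoly ℚ θ).natDegree = 2 * n := by
    rw [minpoly_eq_X_pow_sub_C hθ' (irreducible_X_pow_sub_C_sq_mul hbd h2 (by lia)),
      natDegree_X_pow_sub_C]
  have hw : (θ ^ n / b) ^ 2 = d := by
    rw [div_pow, ← pow_mul, mul_comm n, hθ, mul_div_cancel_left₀ _ (pow_ne_zero 2 hbK)]
  have hwi : IsIntegral ℤ (θ ^ n / b) := .of_pow two_pos (hw ▸ isIntegral_algebraMap (x := d))
  have hθi : IsIntegral ℤ θ := .of_pow (n := 2 * n) (by lia) (hθ' ▸ isIntegral_algebraMap)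
  obtain ⟨_, hsqrtd⟩ := exists_algebra_zsqrtd hw
  have hθn : θ ^ n = b * algebraMap (ℤ√d) K .sqrtd := by rw [hsqrtd, mul_div_cancel₀ _ hbK]
  refine ⟨?_, le_antisymm (Submodule.span_le.mpr ?_) fun z hz ↦ ?_⟩
  · have h := linearIndependent_scaledPowers (θ := θ) (Int.cast_ne_zero (α := ℚ) |>.mpr hb) n
    rw [hdeg, map_intCast] at h
    exact h.restrict_scalars' ℤ
  · exact Set.range_subset_iff.mpr (isIntegral_scaledPowers hθi hwi _)
  · exact mem_span_scaledPowers_of_mem_adjoin_zsqrtd hn₀ hbK hθn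
      (mem_adjoin_zsqrtd_of_isIntegral hθn hgen hbd h2 hn hz)

open Polynomial in
theorem integral_basis_pure_tenth (K : Type*) [Field K] [Algebra ℚ K]
    (θ : K) (hθ : θ ^ 10 = 150)
    (hirr : Irreducible ((X : ℚ[X]) ^ 10 - C (150 : ℚ)))
    (hgen : Algebra.adjoin ℚ ({θ} : Set K) = ⊤) :
    LinearIndependent ℤ
        ![(1 : K), θ, θ ^ 2, θ ^ 3, θ ^ 4,
          θ ^ 5 / 5, θ ^ 6 / 5, θ ^ 7 / 5, θ ^ 8 / 5, θ ^ 9 / 5] ∧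
      Submodule.span ℤ
          (Set.range ![(1 : K), θ, θ ^ 2, θ ^ 3, θ ^ 4,
            θ ^ 5 / 5, θ ^ 6 / 5, θ ^ 7 / 5, θ ^ 8 / 5, θ ^ 9 / 5]) =
        Subalgebra.toSubmodule (integralClosure ℤ K) := by
  have hfamily : ![(1 : K), θ, θ ^ 2, θ ^ 3, θ ^ 4,
      θ ^ 5 / 5, θ ^ 6 / 5, θ ^ 7 / 5, θ ^ 8 / 5, θ ^ 9 / 5] =
      scaledPowers θ ((5 : ℤ) : K) 5 (2 * 5) := by
    ext i
    fin_cases i <;> simp [scaledPowers]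
  rw [hfamily]
  have hsq : Squarefree (5 * 6 : ℤ) :=
    Int.squarefree_natCast.mpr (by decide +kernel : Squarefree 30)
  exact integral_basis_pure_tenth_general (k := 1) (by norm_num [hθ]) hgen hsq (by norm_num)
    (by norm_num)
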